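/- arXiv:2403.08617 — 3 statements merged into one kernel-verified Lean document; each statement's English description precedes it below -/
import Mathlib

section
/- For every C ∈ ℂ^{n×n} with n ≥ 1, the numerical range satisfies W(C) = { tr(CX) : X ∈ ℂ^{n×n} Hermitian positive semidefinite with tr(X) = 1 }. -/
open Matrix ComplexOrder

/-- The numerical range `W(C) = {x* C x : ‖x‖ = 1}` of a complex `n × n` matrix. -/
def numericalRange (n : ℕ) (C : Matrix (Fin n) (Fin n) ℂ) : Set ℂ :=
  {z | ∃ x : Fin n → ℂ, star x ⬝ᵥ x = 1 ∧ star x ⬝ᵥ C.mulVec x = z}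

/-!
A rank-one matrix `x x*` with `‖x‖ = 1` is positive semidefinite of trace one and satisfies
`tr (C x x*) = x* C x`, which gives one inclusion. Conversely, in an orthonormal eigenbasis of `X`
the number `tr (C X)` is the average of the values `v* C v` at the eigenvectors `v`, weighted by the
eigenvalues, so the other inclusion follows from the Toeplitz–Hausdorff theorem: the numerical range
is convex.

For the latter, let `B` be the sesquilinear form of `C` and let `w` lie strictly between its values
`a ≠ b` at unit vectors `x` and `y`. The form `conj (b - a) • (B - w ⟪·, ·⟫)` is negative at `x` and
positive at `y`. After rotating `x` by a phase it is real on the segment from `x` to `y`, so it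
vanishes at some `z ≠ 0` there, and `B` takes the value `w` at `z / ‖z‖`.
-/

open RCLike

open scoped ComplexConjugate

section Sesquilinear

variable {𝕜 E : Type*} [RCLike 𝕜] [AddCommGroup E] [Module 𝕜 E]
  (B : E →ₗ⋆[𝕜] E →ₗ[𝕜] 𝕜) {x y : E}

lemma apply_smul_self_eq_norm_sq_mul (c : 𝕜) (x : E) :
    B (c • x) (c • x) = (‖c‖ : 𝕜) ^ 2 * B x x := by
  rw [map_smul, map_smulₛₗ, LinearMap.smul_apply, smul_eq_mul, smul_eq_mul, ← mul_assoc,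
    RCLike.mul_conj]

lemma linearIndependent_pair_of_apply_self_neg_of_pos (hx : B x x < 0) (hy : 0 < B y y) :
    LinearIndependent 𝕜 ![x, y] := by
  refine LinearIndependent.pair_iff.2 fun c d h => ?_
  have hB : (‖c‖ : 𝕜) ^ 2 * B x x = (‖d‖ : 𝕜) ^ 2 * B y y := by
    rw [← apply_smul_self_eq_norm_sq_mul, ← apply_smul_self_eq_norm_sq_mul,
      eq_neg_of_add_eq_zero_left h]
    simp only [map_neg, LinearMap.neg_apply, neg_neg]
  obtain ⟨a, ha, hax⟩ := neg_iff_exists_ofReal.1 hx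
  obtain ⟨b, hb, hby⟩ := pos_iff_exists_ofReal.1 hy
  rw [← hax, ← hby] at hB
  have hab : ‖c‖ ^ 2 * a = ‖d‖ ^ 2 * b := by exact_mod_cast hB
  have hca : ‖c‖ ^ 2 * a ≤ 0 := mul_nonpos_of_nonneg_of_nonpos (sq_nonneg _) ha.le
  have hdb : 0 ≤ ‖d‖ ^ 2 * b := mul_nonneg (sq_nonneg _) hb.le
  have hc : ‖c‖ ^ 2 * a = 0 := by linarith
  have hd : ‖d‖ ^ 2 * b = 0 := by linarith
  simpa [ha.ne, hb.ne'] using And.intro hc hd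

lemma exists_apply_self_eq_zero_of_isSelfAdjoint (hx : B x x < 0) (hy : 0 < B y y)
    (hxy : IsSelfAdjoint (B x y + B y x)) : ∃ z ≠ 0, B z z = 0 := by
  obtain ⟨a, ha, hax⟩ := neg_iff_exists_ofReal.1 hx
  obtain ⟨b, hb, hby⟩ := pos_iff_exists_ofReal.1 hy
  obtain ⟨r, hr⟩ := conj_eq_iff_real.1 hxy
  let f : ℝ → ℝ := fun s => (1 - s) ^ 2 * a + s * (1 - s) * r + s ^ 2 * b
  have hf (s : ℝ) : B (((1 - s : ℝ) : 𝕜) • x + (s : 𝕜) • y) (((1 - s : ℝ) : 𝕜) • x + (s : 𝕜) • y)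
      = (f s : 𝕜) := by
    simp only [map_add, map_smulₛₗ, LinearMap.add_apply, LinearMap.smul_apply, smul_eq_mul,
      conj_ofReal, RingHom.id_apply, ← hax, ← hby, f]
    push_cast
    linear_combination (s : 𝕜) * (1 - s) * hr
  obtain ⟨s, -, hs⟩ : (0 : ℝ) ∈ f '' Set.Icc 0 1 :=
    intermediate_value_Icc zero_le_one (by fun_prop) ⟨by simp [f, ha.le], by simp [f, hb.le]⟩
  refine ⟨_, fun hz => ?_, by rw [hf s, hs, ofReal_zero]⟩
  obtain ⟨h₁, h₂⟩ := LinearIndependent.pair_iff.1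
    (linearIndependent_pair_of_apply_self_neg_of_pos B hx hy) _ _ hz
  rw [ofReal_eq_zero] at h₁ h₂
  linarith

lemma exists_norm_eq_one_isSelfAdjoint_conj_mul_add_mul (α β : 𝕜) :
    ∃ p : 𝕜, ‖p‖ = 1 ∧ IsSelfAdjoint (conj p * α + p * β) := by
  obtain ⟨p, hp, hγ⟩ := exists_norm_eq_mul_self (β - conj α)
  refine ⟨p, hp, ?_⟩
  have h : conj p * α + p * β = conj p * α + p * conj α + (‖β - conj α‖ : 𝕜) := by
    rw [hγ]
    ring
  rw [isSelfAdjoint_iff, h, ← starRingEnd_apply]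
  simp only [map_add, map_mul, conj_conj, conj_ofReal]
  ring

lemma exists_apply_self_eq_zero (hx : B x x < 0) (hy : 0 < B y y) : ∃ z ≠ 0, B z z = 0 := by
  obtain ⟨p, hp, hpxy⟩ := exists_norm_eq_one_isSelfAdjoint_conj_mul_add_mul (B x y) (B y x)
  refine exists_apply_self_eq_zero_of_isSelfAdjoint B (x := p • x) ?_ hy ?_
  · simpa only [apply_smul_self_eq_norm_sq_mul, hp, ofReal_one, one_pow, one_mul] using hx
  · simpa only [map_smulₛₗ, LinearMap.smul_apply, RingHom.id_apply, smul_eq_mul] using hpxy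

end Sesquilinear

section InnerProductSpace

variable {𝕜 E : Type*} [RCLike 𝕜] [NormedAddCommGroup E] [InnerProductSpace 𝕜 E]
  (B : E →ₗ⋆[𝕜] E →ₗ[𝕜] 𝕜)

lemma mem_image_apply_self_sphere {w : 𝕜} {z : E} (hz : z ≠ 0)
    (hBz : B z z = w * (‖z‖ : 𝕜) ^ 2) : w ∈ (fun x => B x x) '' Metric.sphere 0 1 := by
  have hz' : (‖z‖ : 𝕜) ≠ 0 := ofReal_ne_zero.2 (norm_ne_zero_iff.2 hz)
  refine ⟨(‖z‖ : 𝕜)⁻¹ • z, mem_sphere_zero_iff_norm.2 (norm_smul_inv_norm hz), ?_⟩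
  dsimp only
  rw [apply_smul_self_eq_norm_sq_mul, hBz, norm_inv, norm_ofReal, abs_norm, ofReal_inv]
  field_simp

/-- The **Toeplitz–Hausdorff theorem**. -/
theorem convex_image_apply_self_sphere : Convex ℝ ((fun x => B x x) '' Metric.sphere 0 1) := by
  rw [convex_iff_pairwise_pos]
  rintro _ ⟨x, hx, rfl⟩ _ ⟨y, hy, rfl⟩ hne s t hs ht hst
  rw [mem_sphere_zero_iff_norm] at hx hy
  dsimp only at hne ⊢
  set w : 𝕜 := s • B x x + t • B y y with hw
  let d : 𝕜 := B y y - B x x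
  have hd : d ≠ 0 := sub_ne_zero.2 hne.symm
  let A : E →ₗ⋆[𝕜] E →ₗ[𝕜] 𝕜 := conj d • (B - w • innerₛₗ 𝕜)
  have hA (z : E) : A z z = conj d * (B z z - w * (‖z‖ : 𝕜) ^ 2) := by
    simp only [A, LinearMap.smul_apply, LinearMap.sub_apply, innerₛₗ_apply_apply, smul_eq_mul,
      inner_self_eq_norm_sq_to_K]
  have hA_unit {z : E} (hz : ‖z‖ = 1) {r : ℝ} (hr : B z z - w = r * d) :
      ((r * ‖d‖ ^ 2 : ℝ) : 𝕜) = A z z := by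
    rw [hA, hz, ofReal_one, one_pow, mul_one, hr, mul_left_comm, RCLike.conj_mul]
    push_cast
    rfl
  have hst' : (s : 𝕜) + t = 1 := by exact_mod_cast hst
  rw [real_smul_eq_coe_mul, real_smul_eq_coe_mul] at hw
  have hxw : B x x - w = (-t : ℝ) * d := by
    push_cast
    linear_combination -hw - B x x * hst'
  have hyw : B y y - w = s * d := by linear_combination -hw - B y y * hst'
  have hd_sq : 0 < ‖d‖ ^ 2 := by positivity
  obtain ⟨z, hz, hAz⟩ := exists_apply_self_eq_zero A
    (neg_iff_exists_ofReal.2 ⟨_, mul_neg_of_neg_of_pos (neg_lt_zero.2 ht) hd_sq, hA_unit hx hxw⟩)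
    (pos_iff_exists_ofReal.2 ⟨_, mul_pos hs hd_sq, hA_unit hy hyw⟩)
  rw [hA] at hAz
  exact mem_image_apply_self_sphere B hz
    (sub_eq_zero.1 ((mul_eq_zero_iff_left (star_ne_zero.2 hd)).1 hAz))

end InnerProductSpace

section Matrix

variable {𝕜 ι : Type*} [RCLike 𝕜] [Fintype ι]

lemma star_ofLp_dotProduct_ofLp_eq_one_iff {x : EuclideanSpace 𝕜 ι} :
    star x.ofLp ⬝ᵥ x.ofLp = 1 ↔ ‖x‖ = 1 := by
  rw [dotProduct_comm, ← EuclideanSpace.inner_eq_star_dotProduct, inner_self_eq_norm_sq_to_K]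
  norm_cast
  exact pow_eq_one_iff_of_nonneg (norm_nonneg x) two_ne_zero

lemma convex_setOf_star_dotProduct_mulVec (C : Matrix ι ι 𝕜) :
    Convex ℝ {z | ∃ x : ι → 𝕜, star x ⬝ᵥ x = 1 ∧ star x ⬝ᵥ C *ᵥ x = z} := by
  classical
  let B := (innerₛₗ 𝕜).compl₂ C.toEuclideanLin
  have hB (x : EuclideanSpace 𝕜 ι) : B x x = star x.ofLp ⬝ᵥ C *ᵥ x.ofLp := dotProduct_comm _ _
  convert convex_image_apply_self_sphere B
  ext z
  simp only [Set.mem_ofPred_eq, Set.mem_image, mem_sphere_zero_iff_norm, hB,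
    ← star_ofLp_dotProduct_ofLp_eq_one_iff]
  exact (WithLp.equiv 2 (ι → 𝕜)).symm.exists_congr_left

lemma trace_mul_eq_sum_eigenvalues_smul [DecidableEq ι] {X : Matrix ι ι 𝕜} (hX : X.IsHermitian)
    (C : Matrix ι ι 𝕜) :
    (C * X).trace = ∑ i, hX.eigenvalues i •
      (star (hX.eigenvectorBasis i).ofLp ⬝ᵥ C *ᵥ (hX.eigenvectorBasis i).ofLp) := by
  rw [← trace_toLin_eq (C * X) (EuclideanSpace.basisFun ι 𝕜).toBasis,
    ← toEuclideanLin_eq_toLin_orthonormal, LinearMap.trace_eq_sum_inner _ hX.eigenvectorBasis]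
  refine Finset.sum_congr rfl fun i _ => ?_
  rw [EuclideanSpace.inner_eq_star_dotProduct, ofLp_toLpLin, toLin'_apply, ← mulVec_mulVec,
    hX.mulVec_eigenvectorBasis, mulVec_smul, smul_dotProduct, dotProduct_comm]

theorem numericalRange_eq_SDP_general (C : Matrix ι ι 𝕜) :
    {z | ∃ x : ι → 𝕜, star x ⬝ᵥ x = 1 ∧ star x ⬝ᵥ C *ᵥ x = z} =
      {z | ∃ X : Matrix ι ι 𝕜, X.PosSemidef ∧ X.trace = 1 ∧ (C * X).trace = z} := by
  classical
  refine Set.Subset.antisymm ?_ ?_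
  · rintro _ ⟨x, hx, rfl⟩
    refine ⟨vecMulVec x (star x), posSemidef_vecMulVec_self_star x, ?_, ?_⟩
    · rw [trace_vecMulVec, dotProduct_comm, hx]
    · rw [mul_vecMulVec, trace_vecMulVec, dotProduct_comm]
  · rintro _ ⟨X, hX, htr, rfl⟩
    have hsum : ∑ i, hX.isHermitian.eigenvalues i = 1 := by
      exact_mod_cast hX.isHermitian.trace_eq_sum_eigenvalues.symm.trans htr
    rw [trace_mul_eq_sum_eigenvalues_smul hX.isHermitian]
    exact (convex_setOf_star_dotProduct_mulVec C).sum_mem (fun i _ => hX.eigenvalues_nonneg i) hsum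
      fun i _ => ⟨_, star_ofLp_dotProduct_ofLp_eq_one_iff.2
        (hX.isHermitian.eigenvectorBasis.norm_eq_one i), rfl⟩

end Matrix

/-- SDP representation of the numerical range:
`W(C) = { tr(CX) : X Hermitian PSD, tr(X) = 1 }`. -/
theorem numericalRange_eq_SDP (n : ℕ) (hn : 1 ≤ n) (C : Matrix (Fin n) (Fin n) ℂ) :
    numericalRange n C =
      {z | ∃ X : Matrix (Fin n) (Fin n) ℂ, X.PosSemidef ∧ X.trace = 1 ∧ (C * X).trace = z} :=
  numericalRange_eq_SDP_general C
end

section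
/- For every C ∈ ℂ^{n×n} with n ≥ 1, the numerical range W(C) is a compact convex subset of ℂ. -/
/-!
A point `z` lies in the numerical range of a sesquilinear form `B` exactly when the shifted form
`D := B - z ⟪·, ·⟫` has a nonzero isotropic vector. Convexity therefore says that `D` has one as
soon as `0` lies on the segment from `D x x` to `D y y`. Searching along `x + (t * w) • y` with
`t` real, one chooses the phase `w` so that the cross terms are a real multiple of `D y y`; the
equation `D v v = 0` then becomes a real quadratic in `t` whose discriminant is nonnegative.
-/

open Matrix

open ComplexConjugate

section IsotropicVector

variable {𝕜 : Type*} [RCLike 𝕜]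

theorem exists_norm_eq_one_mul_add_conj_mul_eq_ofReal (β γ : 𝕜) :
    ∃ w : 𝕜, ‖w‖ = 1 ∧ ∃ g : ℝ, w * β + conj w * γ = g := by
  obtain ⟨w, hw, hwd⟩ := RCLike.exists_norm_eq_mul_self (β - conj γ)
  refine ⟨w, hw, ‖β - conj γ‖ + 2 * RCLike.re (w * conj γ), ?_⟩
  have hadd := RCLike.add_conj (w * conj γ)
  simp only [map_mul, RCLike.conj_conj] at hadd
  push_cast
  linear_combination hadd - hwd

theorem exists_sq_add_mul_eq_of_nonneg (g : ℝ) {s : ℝ} (hs : 0 ≤ s) :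
    ∃ t : ℝ, t ^ 2 + g * t = s := by
  have hdiscrim : 0 ≤ discrim 1 g (-s) := by
    rw [discrim]
    linarith [sq_nonneg g]
  obtain ⟨t, ht⟩ := exists_quadratic_eq_zero one_ne_zero
    ⟨_, (Real.mul_self_sqrt hdiscrim).symm⟩
  exact ⟨t, by linear_combination ht⟩

variable {V : Type*} [AddCommGroup V] [Module 𝕜 V] (D : V →ₗ⋆[𝕜] V →ₗ[𝕜] 𝕜)

theorem sesqForm_smul_smul_self (c : 𝕜) (x : V) : D (c • x) (c • x) = ‖c‖ ^ 2 * D x x := by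
  simp only [map_smulₛₗ, LinearMap.smul_apply, smul_eq_mul, RingHom.id_apply, ← RCLike.mul_conj]
  ring

theorem sesqForm_add_smul_self (c : 𝕜) (x y : V) :
    D (x + c • y) (x + c • y) =
      D x x + (c * D x y + conj c * D y x) + ‖c‖ ^ 2 * D y y := by
  simp only [map_add, map_smulₛₗ, LinearMap.add_apply, LinearMap.smul_apply, smul_eq_mul,
    RingHom.id_apply, ← RCLike.mul_conj]
  ring

theorem add_smul_ne_zero_of_apply_self_eq_neg_mul {x y : V} (hx : x ≠ 0) (hy : D y y ≠ 0) {s : ℝ}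
    (hs : 0 ≤ s) (hxy : D x x = -(s * D y y)) (c : 𝕜) : x + c • y ≠ 0 := by
  intro h
  have hx_eq : x = (-c) • y := by rw [neg_smul, eq_neg_of_add_eq_zero_left h]
  have hsum : ((‖c‖ ^ 2 + s : ℝ) : 𝕜) * D y y = 0 := by
    rw [hx_eq, sesqForm_smul_smul_self, norm_neg] at hxy
    push_cast
    linear_combination hxy
  have hsum_real : ‖c‖ ^ 2 + s = 0 := by
    exact_mod_cast (mul_eq_zero.mp hsum).resolve_right hy
  have hc : c = 0 := norm_eq_zero.mp (by nlinarith [sq_nonneg ‖c‖])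
  exact hx (by simp [hx_eq, hc])

theorem exists_apply_add_smul_self_eq_zero {x y : V} (hy : D y y ≠ 0) {s : ℝ} (hs : 0 ≤ s)
    (hxy : D x x = -(s * D y y)) : ∃ c : 𝕜, D (x + c • y) (x + c • y) = 0 := by
  obtain ⟨w, hw, g, hg⟩ :=
    exists_norm_eq_one_mul_add_conj_mul_eq_ofReal (D x y / D y y) (D y x / D y y)
  obtain ⟨t, ht⟩ := exists_sq_add_mul_eq_of_nonneg g hs
  have hcross : w * D x y + conj w * D y x = g * D y y := by
    rw [← hg]
    field_simp
  have hnorm : (‖(t : 𝕜) * w‖ : 𝕜) ^ 2 = (t : 𝕜) ^ 2 := by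
    rw [norm_mul, hw, mul_one, RCLike.norm_ofReal]
    exact_mod_cast sq_abs t
  have ht_coe : (t : 𝕜) ^ 2 + g * t = s := by exact_mod_cast ht
  refine ⟨t * w, ?_⟩
  rw [sesqForm_add_smul_self, hnorm, map_mul, RCLike.conj_ofReal, hxy]
  linear_combination (t : 𝕜) * hcross + D y y * ht_coe

theorem exists_ne_zero_apply_self_eq_zero_of_zero_mem_segment {x y : V} (hx : x ≠ 0) (hy : y ≠ 0)
    (h : (0 : 𝕜) ∈ segment ℝ (D x x) (D y y)) : ∃ v ≠ 0, D v v = 0 := by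
  by_cases hDy : D y y = 0
  · exact ⟨y, hy, hDy⟩
  rw [mem_segment_iff_sameRay, zero_sub, sub_zero] at h
  obtain ⟨s, hs, hsxy⟩ := h.exists_nonneg_right hDy
  have hxy : D x x = -(s * D y y) := by rw [← RCLike.real_smul_eq_coe_mul, ← hsxy, neg_neg]
  obtain ⟨c, hc⟩ := exists_apply_add_smul_self_eq_zero D hDy hs hxy
  exact ⟨x + c • y, add_smul_ne_zero_of_apply_self_eq_neg_mul D hx hDy hs hxy c, hc⟩

end IsotropicVector

theorem continuous_sesqForm_apply_self {𝕜 E : Type*} [RCLike 𝕜] [AddCommGroup E] [Module 𝕜 E]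
    [TopologicalSpace E] [IsTopologicalAddGroup E] [ContinuousSMul 𝕜 E] [T2Space E]
    [FiniteDimensional 𝕜 E] (B : E →ₗ⋆[𝕜] E →ₗ[𝕜] 𝕜) : Continuous fun x => B x x := by
  let b := Module.finBasis 𝕜 E
  have hB (x : E) : B x x = ∑ i, conj (b.coord i x) * B (b i) x := by
    conv_lhs => enter [1]; rw [← b.sum_repr x]
    simp only [map_sum, map_smulₛₗ, LinearMap.sum_apply, LinearMap.smul_apply, smul_eq_mul,
      Module.Basis.coord_apply]
  have hcoord (i) : Continuous (b.coord i) := (b.coord i).continuous_of_finiteDimensional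
  have hBb (i) : Continuous (B (b i)) := (B (b i)).continuous_of_finiteDimensional
  simp only [hB]
  exact continuous_finsetSum _ fun i _ =>
    (RCLike.continuous_conj.comp (hcoord i)).mul (hBb i)

section NumericalRange

variable {𝕜 E : Type*} [RCLike 𝕜] [NormedAddCommGroup E]

section NormedSpace

variable [NormedSpace 𝕜 E] (B : E →ₗ⋆[𝕜] E →ₗ[𝕜] 𝕜)

/-- The numerical range of a sesquilinear form on a normed space: the values `B x x` at unit
vectors. The numerical range of an operator `T` on an inner product space is that of the form
`⟪x, T y⟫`, encoded as `(innerₛₗ 𝕜).compl₂ T`. -/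
def sesqNumericalRange : Set 𝕜 :=
  (fun x => B x x) '' Metric.sphere 0 1

variable {B}

theorem mem_sesqNumericalRange_of_apply_self_eq_mul_norm_sq {z : 𝕜} {v : E} (hv : v ≠ 0)
    (h : B v v = z * ‖v‖ ^ 2) : z ∈ sesqNumericalRange B := by
  have hnorm : (‖v‖ : 𝕜) ≠ 0 := by simpa using hv
  refine ⟨(‖v‖⁻¹ : 𝕜) • v, by simpa using norm_smul_inv_norm (𝕜 := 𝕜) hv, ?_⟩
  simp only [sesqForm_smul_smul_self, h, norm_inv, RCLike.norm_ofReal, abs_norm,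
    RCLike.ofReal_inv]
  field_simp

variable (B)

theorem isCompact_sesqNumericalRange [FiniteDimensional 𝕜 E] :
    IsCompact (sesqNumericalRange B) :=
  have := FiniteDimensional.proper_rclike 𝕜 E
  (isCompact_sphere 0 1).image (continuous_sesqForm_apply_self B)

end NormedSpace

variable [InnerProductSpace 𝕜 E] (B : E →ₗ⋆[𝕜] E →ₗ[𝕜] 𝕜)

theorem convex_sesqNumericalRange : Convex ℝ (sesqNumericalRange B) := by
  rw [convex_iff_segment_subset]
  rintro _ ⟨x, hx, rfl⟩ _ ⟨y, hy, rfl⟩ z hz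
  let D : E →ₗ⋆[𝕜] E →ₗ[𝕜] 𝕜 := B - z • innerₛₗ 𝕜
  have hD (u : E) : D u u = B u u - z * ‖u‖ ^ 2 := by
    simp [D, inner_self_eq_norm_sq_to_K]
  have hD_unit {u : E} (hu : u ∈ Metric.sphere 0 1) : D u u = -z + B u u := by
    rw [hD, mem_sphere_zero_iff_norm.mp hu]
    simp [sub_eq_neg_add]
  have hzero : (0 : 𝕜) ∈ segment ℝ (D x x) (D y y) := by
    rw [hD_unit hx, hD_unit hy, ← neg_add_cancel z, mem_segment_translate]
    exact hz
  obtain ⟨v, hv, hDv⟩ := exists_ne_zero_apply_self_eq_zero_of_zero_mem_segment D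
    (ne_zero_of_mem_unit_sphere ⟨x, hx⟩) (ne_zero_of_mem_unit_sphere ⟨y, hy⟩) hzero
  rw [hD, sub_eq_zero] at hDv
  exact mem_sesqNumericalRange_of_apply_self_eq_mul_norm_sq hv hDv

theorem numericalRange_isCompact_convex_general [FiniteDimensional 𝕜 E] :
    IsCompact (sesqNumericalRange B) ∧ Convex ℝ (sesqNumericalRange B) :=
  ⟨isCompact_sesqNumericalRange B, convex_sesqNumericalRange B⟩

end NumericalRange

theorem star_dotProduct_self_eq_one_iff {𝕜 ι : Type*} [RCLike 𝕜] [Fintype ι]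
    (x : EuclideanSpace 𝕜 ι) : star x.ofLp ⬝ᵥ x.ofLp = 1 ↔ ‖x‖ = 1 := by
  rw [dotProduct_comm, ← EuclideanSpace.inner_eq_star_dotProduct, inner_self_eq_norm_sq_to_K]
  norm_cast
  exact pow_eq_one_iff_of_nonneg (norm_nonneg x) two_ne_zero

theorem inner_toEuclideanLin_self {𝕜 ι : Type*} [RCLike 𝕜] [Fintype ι] [DecidableEq ι]
    (A : Matrix ι ι 𝕜) (x : EuclideanSpace 𝕜 ι) :
    inner 𝕜 x (toEuclideanLin A x) = star x.ofLp ⬝ᵥ A *ᵥ x.ofLp := by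
  rw [EuclideanSpace.inner_eq_star_dotProduct, ofLp_toLpLin, toLin'_apply, dotProduct_comm]

theorem numericalRange_eq_sesqNumericalRange (n : ℕ) (C : Matrix (Fin n) (Fin n) ℂ) :
    numericalRange n C = sesqNumericalRange ((innerₛₗ ℂ).compl₂ (toEuclideanLin C)) := by
  ext z
  simp only [sesqNumericalRange, Set.mem_image, mem_sphere_zero_iff_norm,
    LinearMap.compl₂_apply, innerₛₗ_apply_apply, inner_toEuclideanLin_self,
    ← star_dotProduct_self_eq_one_iff]
  exact (WithLp.equiv 2 (Fin n → ℂ)).symm.exists_congr_left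

/-- Hausdorff–Töplitz: the numerical range is a compact convex subset of `ℂ`. -/
theorem numericalRange_isCompact_convex (n : ℕ) (hn : 1 ≤ n)
    (C : Matrix (Fin n) (Fin n) ℂ) :
    IsCompact (numericalRange n C) ∧ Convex ℝ (numericalRange n C) := by
  rw [numericalRange_eq_sesqNumericalRange]
  exact numericalRange_isCompact_convex_general _
end

section
/- Let n ≥ 1 and C ∈ ℂ^{n×n}, write (1/n)·tr(C) = x + iy with x, y real, set c = ⌈‖C‖_F⌉ and S = [[c + 1 + x, y], [y, c + 1 − x]] ∈ ℝ^{2×2}, and let G = diag((1/n)·I_{2n}, S, 1) ∈ ℝ^{(2n+3)×(2n+3)}. Then G is positive definite, and every real symmetric block-diagonal matrix Z = diag(Y, T, τ), with Y ∈ ℝ^{2n×2n} symmetric, T ∈ ℝ^{2×2} symmetric and τ ∈ ℝ, satisfying ‖Z − G‖_F ≤ 1/n, is positive semidefinite. -/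
open Matrix

/-- The Frobenius norm `‖C‖_F = √tr(C*C)` of a complex matrix. -/
noncomputable def frobNorm (n : ℕ) (C : Matrix (Fin n) (Fin n) ℂ) : ℝ :=
  Real.sqrt (Cᴴ * C).trace.re

/-- The block diagonal matrix `diag(Y, T, τ)` of size `(2n+3) × (2n+3)`. -/
noncomputable def blockDiag3 (n : ℕ) (Y : Matrix (Fin (2 * n)) (Fin (2 * n)) ℝ)
    (T : Matrix (Fin 2) (Fin 2) ℝ) (τ : ℝ) :
    Matrix (Fin (2 * n) ⊕ (Fin 2 ⊕ Fin 1)) (Fin (2 * n) ⊕ (Fin 2 ⊕ Fin 1)) ℝ :=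
  Matrix.fromBlocks Y 0 0 (Matrix.fromBlocks T 0 0 (τ • (1 : Matrix (Fin 1) (Fin 1) ℝ)))

/-- The Frobenius norm `‖M‖_F = √tr(MᵀM)` of a real `(2n+3) × (2n+3)` matrix. -/
noncomputable def frobNormB (n : ℕ)
    (M : Matrix (Fin (2 * n) ⊕ (Fin 2 ⊕ Fin 1)) (Fin (2 * n) ⊕ (Fin 2 ⊕ Fin 1)) ℝ) : ℝ :=
  Real.sqrt (Mᵀ * M).trace

/-!
In the Loewner order `G ≥ (1/n)·I`. Indeed `|tr C| / n ≤ ‖C‖_F ≤ c`, because every diagonal entry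
of `C` is at most `‖C‖_F`, and `[[x, y], [y, -x]]` has eigenvalues `±√(x² + y²)`, so
`S - I = [[c + x, y], [y, c - x]]` is positive semidefinite. Hence `G` is positive definite.
By Cauchy-Schwarz, a Hermitian matrix `H` with `‖H‖_F ≤ r` satisfies `H + r·I ≥ 0`, and
`Z = ((Z - G) + (1/n)·I) + (G - (1/n)·I)`.
-/

open scoped ComplexConjugate ComplexOrder Matrix.Norms.Frobenius

section FrobeniusNorm

variable {ι κ 𝕜 : Type*} [Fintype ι] [Fintype κ] [RCLike 𝕜]

lemma frobenius_norm_eq_sqrt_trace (A : Matrix ι κ 𝕜) :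
    ‖A‖ = √(RCLike.re (Aᴴ * A).trace) := by
  have trace_eq : RCLike.re (Aᴴ * A).trace = ∑ j, ∑ i, ‖A i j‖ ^ 2 := by
    simp only [trace, diag_apply, mul_apply, conjTranspose_apply, RCLike.star_def,
      RCLike.conj_mul, map_sum, ← RCLike.ofReal_pow, RCLike.ofReal_re]
  rw [trace_eq, Finset.sum_comm, frobenius_norm_def, Real.sqrt_eq_rpow]
  simp only [Real.rpow_two]

lemma norm_entry_le_frobenius_norm {E : Type*} [SeminormedAddCommGroup E] (A : Matrix ι κ E)
    (i : ι) (j : κ) : ‖A i j‖ ≤ ‖A‖ :=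
  (PiLp.norm_apply_le (WithLp.toLp 2 (A i)) j).trans
    (PiLp.norm_apply_le (WithLp.toLp 2 fun i => WithLp.toLp 2 (A i)) i)

lemma norm_inv_card_mul_trace_le_frobenius_norm (A : Matrix ι ι 𝕜) :
    ‖(Fintype.card ι : 𝕜)⁻¹ * A.trace‖ ≤ ‖A‖ := by
  have trace_le : ‖A.trace‖ ≤ Fintype.card ι * ‖A‖ := by
    simpa only [trace, diag_apply, Finset.sum_const, Finset.card_univ, nsmul_eq_mul] using
      norm_sum_le_of_le Finset.univ fun i _ => norm_entry_le_frobenius_norm A i i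
  rw [norm_mul, norm_inv, RCLike.norm_natCast]
  exact inv_mul_le_of_le_mul₀ (Nat.cast_nonneg _) (norm_nonneg A) trace_le

lemma norm_toLp_mulVec_le_frobenius_norm (A : Matrix ι κ 𝕜) (v : κ → 𝕜) :
    ‖WithLp.toLp 2 (A *ᵥ v)‖ ≤ ‖A‖ * ‖WithLp.toLp 2 v‖ := by
  simpa only [← replicateCol_mulVec, frobenius_norm_replicateCol] using
    frobenius_norm_mul A (replicateCol Unit v)

lemma norm_star_dotProduct_mulVec_le (A : Matrix ι ι 𝕜) (v : ι → 𝕜) :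
    ‖star v ⬝ᵥ A *ᵥ v‖ ≤ ‖A‖ * ‖WithLp.toLp 2 v‖ ^ 2 := by
  calc ‖star v ⬝ᵥ A *ᵥ v‖
      = ‖inner 𝕜 (WithLp.toLp 2 v) (WithLp.toLp 2 (A *ᵥ v))‖ := by
        rw [EuclideanSpace.inner_toLp_toLp, dotProduct_comm]
    _ ≤ ‖WithLp.toLp 2 v‖ * ‖WithLp.toLp 2 (A *ᵥ v)‖ := norm_inner_le_norm _ _
    _ ≤ ‖WithLp.toLp 2 v‖ * (‖A‖ * ‖WithLp.toLp 2 v‖) := by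
        gcongr
        exact norm_toLp_mulVec_le_frobenius_norm A v
    _ = ‖A‖ * ‖WithLp.toLp 2 v‖ ^ 2 := by ring

variable [DecidableEq ι]

lemma posSemidef_add_smul_one_of_frobenius_norm_le {A : Matrix ι ι 𝕜} {r : ℝ}
    (hA : A.IsHermitian) (hr : ‖A‖ ≤ r) : (A + r • (1 : Matrix ι ι 𝕜)).PosSemidef := by
  have isHermitian : (A + r • (1 : Matrix ι ι 𝕜)).IsHermitian :=
    hA.add (isHermitian_one.smul (IsSelfAdjoint.all r))
  refine .of_dotProduct_mulVec_nonneg isHermitian fun v => ?_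
  refine RCLike.nonneg_iff.2 ⟨?_, isHermitian.im_star_dotProduct_mulVec_self v⟩
  have form_ge : -(‖A‖ * ‖WithLp.toLp 2 v‖ ^ 2) ≤ RCLike.re (star v ⬝ᵥ A *ᵥ v) :=
    neg_le_of_abs_le ((RCLike.abs_re_le_norm _).trans (norm_star_dotProduct_mulVec_le A v))
  have norm_sq_eq : RCLike.re (star v ⬝ᵥ v) = ‖WithLp.toLp 2 v‖ ^ 2 := by
    rw [← inner_self_eq_norm_sq (𝕜 := 𝕜), EuclideanSpace.inner_toLp_toLp, dotProduct_comm]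
  rw [add_mulVec, smul_mulVec, one_mulVec, dotProduct_add, dotProduct_smul, map_add,
    RCLike.smul_re, norm_sq_eq]
  linarith [mul_le_mul_of_nonneg_right hr (sq_nonneg ‖WithLp.toLp 2 v‖)]

lemma posSemidef_of_frobenius_norm_sub_le {A B : Matrix ι ι 𝕜} {r : ℝ} (hB : B.IsHermitian)
    (hA : (A - r • (1 : Matrix ι ι 𝕜)).PosSemidef) (hBA : ‖B - A‖ ≤ r) : B.PosSemidef := by
  have isHermitian : A.IsHermitian := by
    simpa only [sub_add_cancel] using
      hA.isHermitian.add (isHermitian_one.smul (IsSelfAdjoint.all r))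
  convert (posSemidef_add_smul_one_of_frobenius_norm_le (hB.sub isHermitian) hBA).add hA using 1
  abel

end FrobeniusNorm

lemma posDef_of_posSemidef_sub_smul_one {ι 𝕜 : Type*} [DecidableEq ι] [RCLike 𝕜]
    {A : Matrix ι ι 𝕜} {r : ℝ} (hr : 0 < r) (hA : (A - r • (1 : Matrix ι ι 𝕜)).PosSemidef) :
    A.PosDef := by
  simpa only [sub_add_cancel] using PosDef.posSemidef_add hA (PosDef.one.smul hr)

lemma posSemidef_fromBlocks_zero {ι κ R : Type*} [Finite ι] [Finite κ] [Ring R]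
    [PartialOrder R] [StarRing R] [AddLeftMono R] {A : Matrix ι ι R} {D : Matrix κ κ R}
    (hA : A.PosSemidef) (hD : D.PosSemidef) : (fromBlocks A 0 0 D).PosSemidef := by
  have := Fintype.ofFinite ι
  have := Fintype.ofFinite κ
  refine .of_dotProduct_mulVec_nonneg
    (hA.isHermitian.fromBlocks conjTranspose_zero hD.isHermitian) fun v => ?_
  rw [fromBlocks_mulVec, ← Sum.elim_comp_inl_inr (star v), sumElim_dotProduct_sumElim]
  simp only [zero_mulVec, add_zero, zero_add]
  exact add_nonneg (hA.dotProduct_mulVec_nonneg (v ∘ Sum.inl))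
    (hD.dotProduct_mulVec_nonneg (v ∘ Sum.inr))

lemma posSemidef_fin_two_of_norm_le {x y c : ℝ} (h : ‖(x + y * Complex.I : ℂ)‖ ≤ c) :
    !![c + x, y; y, c - x].PosSemidef := by
  refine .of_dotProduct_mulVec_nonneg (by ext i j; fin_cases i <;> fin_cases j <;> rfl)
    fun v => ?_
  -- In complex notation the traceless part is the form `w ↦ Re (z̄ w²) ≥ -|z| |w|²`.
  rw [← Complex.mk_eq_add_mul_I] at h
  let z : ℂ := ⟨x, y⟩
  let w : ℂ := ⟨v 0, v 1⟩
  have form_eq : star v ⬝ᵥ !![c + x, y; y, c - x] *ᵥ v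
      = c * ‖w‖ ^ 2 + (conj z * w ^ 2).re := by
    rw [← Complex.normSq_eq_norm_sq]
    simp only [z, w, Complex.normSq_apply, sq, Complex.mul_re, Complex.mul_im, Complex.conj_re,
      Complex.conj_im, star_trivial, dotProduct, mulVec, Fin.sum_univ_two, of_apply, cons_val_zero,
      cons_val_one, cons_val', cons_val_fin_one]
    ring
  have re_ge : -(‖z‖ * ‖w‖ ^ 2) ≤ (conj z * w ^ 2).re := by
    have norm_eq : ‖conj z * w ^ 2‖ = ‖z‖ * ‖w‖ ^ 2 := by
      rw [norm_mul, norm_pow, Complex.norm_conj]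
    exact norm_eq ▸ neg_le_of_abs_le (Complex.abs_re_le_norm _)
  rw [form_eq]
  linarith [mul_le_mul_of_nonneg_right h (sq_nonneg ‖w‖)]

section BlockDiag3

variable {n : ℕ} {Y : Matrix (Fin (2 * n)) (Fin (2 * n)) ℝ} {T : Matrix (Fin 2) (Fin 2) ℝ} {τ : ℝ}

lemma isHermitian_blockDiag3 (hY : Y.IsSymm) (hT : T.IsSymm) :
    (blockDiag3 n Y T τ).IsHermitian := by
  rw [IsHermitian, conjTranspose_eq_transpose_of_trivial]
  exact hY.fromBlocks transpose_zero (hT.fromBlocks transpose_zero (isSymm_one.smul τ))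

lemma posSemidef_blockDiag3 (hY : Y.PosSemidef) (hT : T.PosSemidef) (hτ : 0 ≤ τ) :
    (blockDiag3 n Y T τ).PosSemidef :=
  posSemidef_fromBlocks_zero hY (posSemidef_fromBlocks_zero hT (PosSemidef.one.smul hτ))

lemma blockDiag3_sub_smul_one (r : ℝ) :
    blockDiag3 n Y T τ - r • 1 = blockDiag3 n (Y - r • 1) (T - r • 1) (τ - r) := by
  simp only [blockDiag3, ← fromBlocks_one, fromBlocks_smul, sub_eq_add_neg, fromBlocks_neg,
    fromBlocks_add, smul_zero, neg_zero, add_zero, add_smul, neg_smul]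

lemma posSemidef_blockDiag3_sub_smul_one_of_norm_le {r x y c : ℝ} (hr : r ≤ 1)
    (hxy : ‖(x + y * Complex.I : ℂ)‖ ≤ c) :
    (blockDiag3 n (r • 1) !![c + 1 + x, y; y, c + 1 - x] 1 - r • 1).PosSemidef := by
  have hT : !![c + 1 + x, y; y, c + 1 - x] - r • 1
      = !![c + x, y; y, c - x] + (1 - r) • (1 : Matrix (Fin 2) (Fin 2) ℝ) := by
    simp only [one_fin_two, smul_of, smul_cons, smul_empty, smul_eq_mul, of_sub_of, of_add_of,
      sub_cons, add_cons, head_cons, tail_cons, empty_sub_empty, empty_add_empty, mul_one,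
      mul_zero, sub_zero, add_zero]
    ring_nf
  rw [blockDiag3_sub_smul_one, sub_self, hT]
  exact posSemidef_blockDiag3 .zero
    ((posSemidef_fin_two_of_norm_le hxy).add (PosSemidef.one.smul (sub_nonneg.2 hr)))
    (sub_nonneg.2 hr)

end BlockDiag3

lemma frobNorm_eq_frobenius_norm (n : ℕ) (C : Matrix (Fin n) (Fin n) ℂ) : frobNorm n C = ‖C‖ :=
  (frobenius_norm_eq_sqrt_trace C).symm

lemma frobNormB_eq_frobenius_norm (n : ℕ)
    (M : Matrix (Fin (2 * n) ⊕ (Fin 2 ⊕ Fin 1)) (Fin (2 * n) ⊕ (Fin 2 ⊕ Fin 1)) ℝ) :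
    frobNormB n M = ‖M‖ := by
  rw [frobenius_norm_eq_sqrt_trace, conjTranspose_eq_transpose_of_trivial]
  rfl

/-- The matrix `G = diag((1/n)·I_{2n}, S, 1)` is positive definite, and every real symmetric
block diagonal matrix `Z = diag(Y, T, τ)` with `‖Z − G‖_F ≤ 1/n` is positive semidefinite. -/
theorem G_posDef_and_ball_posSemidef (n : ℕ) (hn : 1 ≤ n)
    (C : Matrix (Fin n) (Fin n) ℂ) (x y : ℝ)
    (hxy : (n : ℂ)⁻¹ * C.trace = (x : ℂ) + (y : ℂ) * Complex.I) :
    (blockDiag3 n ((n : ℝ)⁻¹ • (1 : Matrix (Fin (2 * n)) (Fin (2 * n)) ℝ))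
        !![(⌈frobNorm n C⌉ : ℝ) + 1 + x, y; y, (⌈frobNorm n C⌉ : ℝ) + 1 - x] 1).PosDef ∧
    ∀ (Y : Matrix (Fin (2 * n)) (Fin (2 * n)) ℝ) (T : Matrix (Fin 2) (Fin 2) ℝ) (τ : ℝ),
      Y.IsSymm → T.IsSymm →
      frobNormB n (blockDiag3 n Y T τ -
        blockDiag3 n ((n : ℝ)⁻¹ • (1 : Matrix (Fin (2 * n)) (Fin (2 * n)) ℝ))
          !![(⌈frobNorm n C⌉ : ℝ) + 1 + x, y; y, (⌈frobNorm n C⌉ : ℝ) + 1 - x] 1) ≤ 1 / n →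
      (blockDiag3 n Y T τ).PosSemidef := by
  have mean_le : ‖(x + y * Complex.I : ℂ)‖ ≤ ⌈frobNorm n C⌉ := by
    rw [← hxy, frobNorm_eq_frobenius_norm]
    simpa only [Fintype.card_fin] using
      (norm_inv_card_mul_trace_le_frobenius_norm C).trans (Int.le_ceil ‖C‖)
  have radius_pos : 0 < (n : ℝ)⁻¹ := inv_pos.2 (Nat.cast_pos.2 hn)
  have gap := posSemidef_blockDiag3_sub_smul_one_of_norm_le (n := n) (Nat.cast_inv_le_one n) mean_le
  refine ⟨posDef_of_posSemidef_sub_smul_one radius_pos gap, fun Y T τ hY hT hZ => ?_⟩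
  rw [frobNormB_eq_frobenius_norm, one_div] at hZ
  exact posSemidef_of_frobenius_norm_sub_le (isHermitian_blockDiag3 hY hT) gap hZ
end
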